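/- Let Δ ≥ 2, m = (Δ−1)² + 1, n = (Δ−1)² + Δ, and let T ∈ ℤ^{(m−Δ)×(Δ−1)} be the arc-node incidence matrix of the complete directed graph on Δ−1 nodes. Define A ∈ ℤ^{m×n} as the block matrix with rows: [I_{Δ−1} | I_{Δ−1} | 0 | 0], [T | 0 | I_{m−Δ} | 0], [−1_{Δ−1}^T | 0 | 0 | Δ]. Then A has full row rank and A is totally Δ-modular, i.e., for every k ∈ [m], every k×k submatrix of A has determinant of absolute value at most Δ; moreover some m×m submatrix of A has determinant of absolute value exactly Δ. -/

import Mathlib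

/-- The arcs of the complete directed graph on `ν` nodes: ordered pairs of distinct nodes. -/
abbrev CompleteArc (ν : ℕ) := {p : Fin ν × Fin ν // p.1 ≠ p.2}

/-- Row index type; its cardinality is `m = (Δ−1)² + 1`. -/
abbrev SparsityRow (ν : ℕ) := Fin ν ⊕ CompleteArc ν ⊕ Unit

/-- Column index type; its cardinality is `n = (Δ−1)² + Δ`. -/
abbrev SparsityCol (ν : ℕ) := Fin ν ⊕ Fin ν ⊕ CompleteArc ν ⊕ Unit

/-- The block matrix `A` with rows `[I_{Δ−1} | I_{Δ−1} | 0 | 0]`,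
`[T | 0 | I_{m−Δ} | 0]` (`T` the arc-node incidence matrix of the complete directed
graph on `Δ−1` nodes), and `[−1ᵀ_{Δ−1} | 0 | 0 | Δ]`. -/
def sparsityMatrix (Δ : ℕ) : Matrix (SparsityRow (Δ - 1)) (SparsityCol (Δ - 1)) ℤ :=
  fun i j =>
    match i, j with
    | Sum.inl i, Sum.inl j => if i = j then 1 else 0
    | Sum.inl i, Sum.inr (Sum.inl j) => if i = j then 1 else 0
    | Sum.inl _, _ => 0
    | Sum.inr (Sum.inl p), Sum.inl j =>
        (if p.1.1 = j then 1 else 0) - (if p.1.2 = j then 1 else 0)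
    | Sum.inr (Sum.inl p), Sum.inr (Sum.inr (Sum.inl q)) => if p = q then 1 else 0
    | Sum.inr (Sum.inl _), _ => 0
    | Sum.inr (Sum.inr _), Sum.inl _ => -1
    | Sum.inr (Sum.inr _), Sum.inr (Sum.inr (Sum.inr _)) => (Δ : ℤ)
    | Sum.inr (Sum.inr _), _ => 0

namespace Matrix

/-- A vector of the form `e_a - e_b`, where either of the two unit vectors may be missing. -/
def IsArcVector {n : Type*} [DecidableEq n] (v : n → ℤ) : Prop :=
  ∃ a b : Option n, ∀ j, v j = (if a = some j then 1 else 0) - (if b = some j then 1 else 0)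

lemma IsArcVector.comp {n n' : Type*} [DecidableEq n] [DecidableEq n'] {v : n → ℤ}
    (hv : IsArcVector v) {g : n' → n} (hg : Function.Injective g) : IsArcVector (v ∘ g) := by
  have key : ∀ a : Option n, ∃ a' : Option n', ∀ j, a = some (g j) ↔ a' = some j := by
    intro a
    by_cases h : ∃ j, a = some (g j)
    · obtain ⟨j, rfl⟩ := h
      exact ⟨some j, fun j' => by simp [hg.eq_iff]⟩
    · exact ⟨none, fun j => by simpa using fun hj => h ⟨j, hj⟩⟩
  obtain ⟨a, b, hab⟩ := hv
  obtain ⟨a', ha⟩ := key a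
  obtain ⟨b', hb⟩ := key b
  exact ⟨a', b', fun j => by simp [hab, ha, hb]⟩

/-- An arc vector is, up to sign, a unit vector or zero, unless its entries sum to zero. -/
lemma IsArcVector.sum_eq_zero_or {n : Type*} [DecidableEq n] [Fintype n] {v : n → ℤ}
    (hv : IsArcVector v) :
    ∑ j, v j = 0 ∨ ∃ c, |v c| ≤ 1 ∧ ∀ j, j ≠ c → v j = 0 := by
  obtain ⟨a, b, hab⟩ := hv
  rcases a with _ | a <;> rcases b with _ | b
  · left; simp [hab]
  · right
    exact ⟨b, by simp [hab], fun j hj => by simp [hab, hj.symm]⟩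
  · right
    exact ⟨a, by simp [hab], fun j hj => by simp [hab, hj.symm]⟩
  · left; simp [hab]

lemma abs_det_le_one_of_isArcVector {k : ℕ} (M : Matrix (Fin k) (Fin k) ℤ)
    (hM : ∀ i, IsArcVector (M i)) : |M.det| ≤ 1 := by
  induction k with
  | zero => simp
  | succ k ih =>
    by_cases h : ∀ i, ∑ j, M i j = 0
    · have hdet : M.det = 0 :=
        exists_mulVec_eq_zero_iff.mp ⟨1, one_ne_zero, by
          ext i; simpa [mulVec, dotProduct] using h i⟩
      simp [hdet]
    · push Not at h
      obtain ⟨i, hi⟩ := h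
      obtain ⟨c, hc, hne⟩ := (hM i).sum_eq_zero_or.resolve_left hi
      rw [det_succ_row M i, Finset.sum_eq_single c (fun j _ hj => by simp [hne j hj]) (by simp)]
      rw [abs_mul, abs_mul, abs_pow, abs_neg, abs_one, one_pow, one_mul]
      exact mul_le_one₀ hc (abs_nonneg _)
        (ih _ fun i' => (hM _).comp Fin.succAbove_right_injective)

lemma isTotallyUnimodular_of_isArcVector {m n : Type*} [DecidableEq n] (N : Matrix m n ℤ)
    (hN : ∀ i, IsArcVector (N i)) : N.IsTotallyUnimodular := by
  intro k f g _ hg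
  have h := abs_det_le_one_of_isArcVector (N.submatrix f g) fun i => (hN (f i)).comp hg
  rcases Int.abs_le_one_iff.mp h with h | h | h <;> rw [h]
  exacts [⟨0, rfl⟩, ⟨1, rfl⟩, ⟨-1, rfl⟩]

lemma IsTotallyUnimodular.abs_det_submatrix_le_one {m n ι : Type*} [Fintype ι] [DecidableEq ι]
    {N : Matrix m n ℤ} (hN : N.IsTotallyUnimodular) (f : ι → m) (g : ι → n) :
    |(N.submatrix f g).det| ≤ 1 := by
  obtain ⟨s, hs⟩ := (isTotallyUnimodular_iff_fintype N).mp hN ι f g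
  rw [← hs]
  cases s <;> simp

end Matrix

open Matrix

/-- The rows of the sparsity matrix other than the last one. -/
abbrev SparsityUpperRow (ν : ℕ) := Fin ν ⊕ CompleteArc ν

/-- The inclusion of the upper rows into all rows. -/
def SparsityUpperRow.toRow {ν : ℕ} : SparsityUpperRow ν → SparsityRow ν :=
  Sum.elim Sum.inl (Sum.inr ∘ Sum.inl)

lemma SparsityRow.eq_last_or_upper {ν : ℕ} (r : SparsityRow ν) :
    r = Sum.inr (Sum.inr ()) ∨ ∃ u : SparsityUpperRow ν, r = u.toRow := by
  rcases r with i | p | _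
  · exact Or.inr ⟨Sum.inl i, rfl⟩
  · exact Or.inr ⟨Sum.inr p, rfl⟩
  · exact Or.inl rfl

lemma sparsityMatrix_upper_isTotallyUnimodular (Δ : ℕ) :
    ((sparsityMatrix Δ).submatrix SparsityUpperRow.toRow id).IsTotallyUnimodular := by
  let N : Matrix (SparsityUpperRow (Δ - 1)) (Fin (Δ - 1)) ℤ :=
    (sparsityMatrix Δ).submatrix SparsityUpperRow.toRow Sum.inl
  have hN : N.IsTotallyUnimodular := by
    refine isTotallyUnimodular_of_isArcVector N ?_
    rintro (i | p)
    · exact ⟨some i, none, fun j => by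
        simp [N, SparsityUpperRow.toRow, sparsityMatrix]⟩
    · exact ⟨some p.1.1, some p.1.2, fun j => by
        simp [N, SparsityUpperRow.toRow, sparsityMatrix]⟩
  have hN' := (fromCols_replicateCol0_isTotallyUnimodular_iff (n' := Unit) _).mpr
    ((fromCols_one_isTotallyUnimodular_iff N).mpr hN)
  convert hN'.submatrix id (fun c : SparsityCol (Δ - 1) => match c with
    | Sum.inl j => Sum.inl (Sum.inl j)
    | Sum.inr (Sum.inl j) => Sum.inl (Sum.inr (Sum.inl j))
    | Sum.inr (Sum.inr (Sum.inl p)) => Sum.inl (Sum.inr (Sum.inr p))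
    | Sum.inr (Sum.inr (Sum.inr u)) => Sum.inr u) using 1
  ext (i | p) (j | j | q | u) <;>
    simp [N, SparsityUpperRow.toRow, sparsityMatrix, one_apply]

/-- The cofactors along the last row of a square submatrix are bounded by one. -/
lemma abs_adjugate_sparsityMatrix_submatrix_le_one (Δ : ℕ) {k : ℕ}
    (f : Fin k → SparsityRow (Δ - 1)) (g : Fin k → SparsityCol (Δ - 1))
    (hf : Function.Injective f) (hg : Function.Injective g)
    {i : Fin k} (hi : f i = Sum.inr (Sum.inr ())) (j : Fin k) :
    |((sparsityMatrix Δ).submatrix f g).adjugate j i| ≤ 1 := by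
  have hW := (sparsityMatrix_upper_isTotallyUnimodular Δ).fromRows_one
  rw [adjugate_apply]
  convert hW.abs_det_submatrix_le_one (fun i' => match f i' with
    | Sum.inl r => Sum.inl (Sum.inl r)
    | Sum.inr (Sum.inl p) => Sum.inl (Sum.inr p)
    | Sum.inr (Sum.inr _) => Sum.inr (g j)) g using 3
  ext i' j'
  by_cases h : i' = i
  · subst h
    simp [hi, one_apply, Pi.single_apply, hg.eq_iff, eq_comm]
  · obtain hr | ⟨u, hu⟩ := (f i').eq_last_or_upper
    · exact absurd (hf (hr.trans hi.symm)) h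
    · rcases u with r | p <;> simp_all [SparsityUpperRow.toRow]

/-- A square submatrix that avoids the last row has determinant at most one in absolute value. -/
lemma abs_det_sparsityMatrix_submatrix_le_one (Δ : ℕ) {k : ℕ}
    (f : Fin k → SparsityRow (Δ - 1)) (g : Fin k → SparsityCol (Δ - 1))
    (hf : ∀ i, f i ≠ Sum.inr (Sum.inr ())) :
    |((sparsityMatrix Δ).submatrix f g).det| ≤ 1 := by
  choose f' hf' using fun i => (f i).eq_last_or_upper.resolve_left (hf i)
  obtain rfl : f = SparsityUpperRow.toRow ∘ f' := funext hf'
  exact (sparsityMatrix_upper_isTotallyUnimodular Δ).abs_det_submatrix_le_one f' g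

lemma sum_abs_sparsityMatrix_last_row_le (Δ : ℕ) {k : ℕ} (g : Fin k → SparsityCol (Δ - 1))
    (hg : Function.Injective g) (hlast : ∀ j, g j ≠ Sum.inr (Sum.inr (Sum.inr ()))) :
    ∑ j, |sparsityMatrix Δ (Sum.inr (Sum.inr ())) (g j)| ≤ (Δ : ℤ) := by
  let w : SparsityCol (Δ - 1) → ℤ := Sum.elim 1 0
  calc ∑ j, |sparsityMatrix Δ (Sum.inr (Sum.inr ())) (g j)| = ∑ j, w (g j) := by
        refine Finset.sum_congr rfl fun j _ => ?_
        have hj := hlast j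
        generalize g j = c at hj
        rcases c with c | c | c | c
        case inr.inr.inr => exact absurd rfl hj
        all_goals simp [w, sparsityMatrix]
    _ = ∑ c ∈ Finset.univ.map ⟨g, hg⟩, w c := by simp
    _ ≤ ∑ c, w c := Finset.sum_le_sum_of_subset_of_nonneg (Finset.subset_univ _)
        fun c _ _ => by rcases c with c | c <;> simp [w]
    _ ≤ Δ := by simp [w]

lemma abs_det_sparsityMatrix_submatrix_le (Δ : ℕ) (hΔ : 1 ≤ Δ) {k : ℕ}
    (f : Fin k → SparsityRow (Δ - 1)) (g : Fin k → SparsityCol (Δ - 1))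
    (hf : Function.Injective f) (hg : Function.Injective g) :
    |((sparsityMatrix Δ).submatrix f g).det| ≤ (Δ : ℤ) := by
  by_cases hrow : ∃ i, f i = Sum.inr (Sum.inr ())
  swap
  · push Not at hrow
    exact (abs_det_sparsityMatrix_submatrix_le_one Δ f g hrow).trans (by exact_mod_cast hΔ)
  obtain ⟨i, hi⟩ := hrow
  have hadj := abs_adjugate_sparsityMatrix_submatrix_le_one Δ f g hf hg hi
  by_cases hcol : ∃ j, g j = Sum.inr (Sum.inr (Sum.inr ()))
  · obtain ⟨j, hj⟩ := hcol
    have hzero : ∀ i', i' ≠ i → (sparsityMatrix Δ).submatrix f g i' j = 0 := by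
      intro i' h
      obtain hr | ⟨r | p, hu⟩ := (f i').eq_last_or_upper
      · exact absurd (hf (hr.trans hi.symm)) h
      all_goals simp [hu, hj, SparsityUpperRow.toRow, sparsityMatrix]
    rw [det_eq_sum_mul_adjugate_col _ j,
      Finset.sum_eq_single i (fun i' _ h => by rw [hzero i' h, zero_mul]) (by simp), abs_mul]
    have hentry : (sparsityMatrix Δ).submatrix f g i j = Δ := by
      simp [hi, hj, sparsityMatrix]
    rw [hentry, Nat.abs_cast]
    exact mul_le_of_le_one_right (by positivity) (hadj j)
  · push Not at hcol
    rw [det_eq_sum_mul_adjugate_row _ i]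
    refine (Finset.abs_sum_le_sum_abs _ _).trans
      (le_trans (Finset.sum_le_sum fun j _ => ?_)
        (sum_abs_sparsityMatrix_last_row_le Δ g hg hcol))
    rw [abs_mul, submatrix_apply, hi]
    exact mul_le_of_le_one_right (abs_nonneg _) (hadj j)

lemma card_completeArc_add (ν : ℕ) : Fintype.card (CompleteArc ν) + ν = ν ^ 2 := by
  have h := Fintype.card_subtype_compl (fun p : Fin ν × Fin ν => p.1 = p.2)
  have hdiag : Fintype.card {p : Fin ν × Fin ν // p.1 = p.2} = ν := by
    rw [Fintype.card_congr (β := Fin ν) ⟨fun p => p.1.1, fun i => ⟨(i, i), rfl⟩,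
      fun ⟨⟨i, j⟩, hij⟩ => by simpa using hij, fun _ => rfl⟩, Fintype.card_fin]
  rw [hdiag] at h
  have hc : Fintype.card (CompleteArc ν) = ν * ν - ν := by simpa using h
  have := Nat.le_mul_self ν
  rw [hc, sq]
  omega

/-- The columns of the diagonal maximal square submatrix. -/
def sparsityDiagonalCol {ν : ℕ} : SparsityRow ν → SparsityCol ν := Sum.inr

lemma det_sparsityMatrix_submatrix_diagonalCol (Δ : ℕ) :
    ((sparsityMatrix Δ).submatrix id sparsityDiagonalCol).det = Δ := by
  have h : (sparsityMatrix Δ).submatrix id sparsityDiagonalCol =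
      diagonal (Sum.elim 1 (Sum.elim 1 fun _ => (Δ : ℤ))) := by
    ext (i | p | u) (j | q | v) <;>
      simp [sparsityDiagonalCol, sparsityMatrix, diagonal_apply]
  rw [h, det_diagonal]
  simp

/-- For `Δ ≥ 2`, the block matrix `A` above (with `m = (Δ−1)² + 1`
rows and `n = (Δ−1)² + Δ` columns) has full row rank and is totally `Δ`-modular:
every `k×k` submatrix has determinant of absolute value at most `Δ`; moreover some
`m×m` submatrix has determinant of absolute value exactly `Δ`. -/
theorem sparsity_matrix_totally_modular (Δ : ℕ) (hΔ : 2 ≤ Δ) :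
    Fintype.card (SparsityRow (Δ - 1)) = (Δ - 1) ^ 2 + 1 ∧
    Fintype.card (SparsityCol (Δ - 1)) = (Δ - 1) ^ 2 + Δ ∧
    (sparsityMatrix Δ).rank = (Δ - 1) ^ 2 + 1 ∧
    (∀ (k : ℕ) (f : Fin k → SparsityRow (Δ - 1)) (g : Fin k → SparsityCol (Δ - 1)),
      Function.Injective f → Function.Injective g →
      |((sparsityMatrix Δ).submatrix f g).det| ≤ (Δ : ℤ)) ∧
    (∃ g : SparsityRow (Δ - 1) → SparsityCol (Δ - 1), Function.Injective g ∧
      |((sparsityMatrix Δ).submatrix id g).det| = (Δ : ℤ)) := by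
  have harc := card_completeArc_add (Δ - 1)
  have hrow : Fintype.card (SparsityRow (Δ - 1)) = (Δ - 1) ^ 2 + 1 := by
    simp only [Fintype.card_sum, Fintype.card_fin, Fintype.card_unit]
    omega
  have hdet := det_sparsityMatrix_submatrix_diagonalCol Δ
  refine ⟨hrow, ?_, ?_, fun k f g hf hg =>
    abs_det_sparsityMatrix_submatrix_le Δ (by omega) f g hf hg,
    sparsityDiagonalCol, Sum.inr_injective, by rw [hdet, Nat.abs_cast]⟩
  · simp only [Fintype.card_sum, Fintype.card_fin, Fintype.card_unit]
    omega
  · rw [← hrow]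
    refine le_antisymm (rank_le_card_height _) ?_
    rw [← rank_of_det_ne_zero (A := (sparsityMatrix Δ).submatrix id sparsityDiagonalCol)
      (by rw [hdet]; exact_mod_cast (by omega))]
    exact rank_submatrix_le _ _ _
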